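/- Let p > 0, q > 0 and ξ₀ be real numbers. Then on any open interval of ξ where sin(√(pq)(ξ+ξ₀)) ≠ 0 and −cot(√(pq)(ξ+ξ₀)) > 0, the function Φ(ξ) = ln(−√(p/q)·cot(√(pq)(ξ+ξ₀))) is differentiable and satisfies the auxiliary ODE Φ'(ξ) = p·exp(−Φ(ξ)) + q·exp(Φ(ξ)) (i.e. the case r = 0). -/

import Mathlib

/-!
The substitution `u = exp Φ` turns `Φ' = p * exp (-Φ) + q * exp Φ + r` into the Riccati equation
`u' = p + q * u ^ 2 + r * u`. For `r = 0`, since `cot' = -(1 + cot ^ 2)`, the function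
`u = -(k * cot (w * (ξ + c)))` has `u' = k * w + k * w * cot ^ 2`, so it solves the Riccati equation
when `k * w = p` and `q * k = w`; for `p, q > 0` this is `k = √(p / q)`, `w = √(p * q)`.
-/

theorem hasDerivAt_real_cot {x : ℝ} (hx : Real.sin x ≠ 0) :
    HasDerivAt Real.cot (-(1 + Real.cot x ^ 2)) x := by
  have hquot : HasDerivAt Real.cot
      ((-Real.sin x * Real.sin x - Real.cos x * Real.cos x) / Real.sin x ^ 2) x :=
    ((Real.hasDerivAt_cos x).div (Real.hasDerivAt_sin x) hx).congr_of_eventuallyEq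
      (.of_forall Real.cot_eq_cos_div_sin)
  refine hquot.congr_deriv ?_
  rw [Real.cot_eq_cos_div_sin]
  field_simp
  ring

theorem hasDerivAt_log_of_riccati {u : ℝ → ℝ} {p q r x : ℝ}
    (hu : HasDerivAt u (p + q * u x ^ 2 + r * u x) x) (hpos : 0 < u x) :
    HasDerivAt (fun y => Real.log (u y))
      (p * Real.exp (-Real.log (u x)) + q * Real.exp (Real.log (u x)) + r) x := by
  refine (hu.log hpos.ne').congr_deriv ?_
  rw [Real.exp_neg, Real.exp_log hpos]
  field_simp

theorem hasDerivAt_neg_mul_cot_riccati {p q k w c x : ℝ} (hkw : k * w = p) (hqk : q * k = w)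
    (hsin : Real.sin (w * (x + c)) ≠ 0) :
    HasDerivAt (fun y => -(k * Real.cot (w * (y + c))))
      (p + q * (-(k * Real.cot (w * (x + c)))) ^ 2) x := by
  have hphase : HasDerivAt (fun y => w * (y + c)) (w * 1) x :=
    ((hasDerivAt_id x).add_const c).const_mul w
  refine (((hasDerivAt_real_cot hsin).comp x hphase).const_mul k).fun_neg.congr_deriv ?_
  subst hkw hqk
  ring

theorem mul_sqrt_div_eq_sqrt_mul (p : ℝ) {q : ℝ} (hq : 0 ≤ q) :
    q * Real.sqrt (p / q) = Real.sqrt (p * q) := by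
  calc q * Real.sqrt (p / q) = Real.sqrt (q ^ 2 * (p / q)) := by
        rw [Real.sqrt_mul (sq_nonneg q), Real.sqrt_sq hq]
    _ = Real.sqrt (p * q) := by
        congr 1
        field_simp

theorem sqrt_div_mul_sqrt_mul {p q : ℝ} (hp : 0 ≤ p) (hq : 0 < q) :
    Real.sqrt (p / q) * Real.sqrt (p * q) = p := by
  rw [← mul_sqrt_div_eq_sqrt_mul p hq.le, mul_left_comm,
    Real.mul_self_sqrt (div_nonneg hp hq.le), mul_div_cancel₀ p hq.ne']

/-- Type 2 solution (9f) of the auxiliary ODE Φ' = p·exp(-Φ) + q·exp(Φ)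
with r = 0 and p > 0, q > 0, where cot θ = cos θ / sin θ. -/
theorem stmt_5 (p q ξ₀ : ℝ) (hp : p > 0) (hq : q > 0) (a b : ℝ)
    (hsin : ∀ ξ ∈ Set.Ioo a b, Real.sin (Real.sqrt (p * q) * (ξ + ξ₀)) ≠ 0)
    (hcot : ∀ ξ ∈ Set.Ioo a b,
      -(Real.cos (Real.sqrt (p * q) * (ξ + ξ₀)) / Real.sin (Real.sqrt (p * q) * (ξ + ξ₀))) > 0) :
    ∀ ξ ∈ Set.Ioo a b,
      HasDerivAt
        (fun ξ' => Real.log (-(Real.sqrt (p / q) *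
          (Real.cos (Real.sqrt (p * q) * (ξ' + ξ₀)) / Real.sin (Real.sqrt (p * q) * (ξ' + ξ₀))))))
        (p * Real.exp (-Real.log (-(Real.sqrt (p / q) *
            (Real.cos (Real.sqrt (p * q) * (ξ + ξ₀)) / Real.sin (Real.sqrt (p * q) * (ξ + ξ₀))))))
          + q * Real.exp (Real.log (-(Real.sqrt (p / q) *
            (Real.cos (Real.sqrt (p * q) * (ξ + ξ₀)) / Real.sin (Real.sqrt (p * q) * (ξ + ξ₀))))))) ξ := by
  simp only [← Real.cot_eq_cos_div_sin] at hcot ⊢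
  intro ξ hξ
  have hpos : 0 < -(Real.sqrt (p / q) * Real.cot (Real.sqrt (p * q) * (ξ + ξ₀))) := by
    rw [← mul_neg]
    exact mul_pos (Real.sqrt_pos.mpr (div_pos hp hq)) (hcot ξ hξ)
  have hriccati := hasDerivAt_neg_mul_cot_riccati (sqrt_div_mul_sqrt_mul hp.le hq)
    (mul_sqrt_div_eq_sqrt_mul p hq.le) (hsin ξ hξ)
  simpa only [add_zero] using
    hasDerivAt_log_of_riccati (r := 0) (hriccati.congr_deriv (by ring)) hpos
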